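/- Let g : ℝ → ℝ be a Schwartz function. Then for every x ∈ ℝ, Λ[y ↦ y·g(y)](x) = −Hg(x) + x·Λg(x). -/

import Mathlib

/-!
For `y ≠ x` one has the pointwise identity
`(x g(x) - y g(y)) / (x - y)² = x (g(x) - g(y)) / (x - y)² - g(y) / (y - x)`,
so the truncated integrals satisfy the claimed relation for every `ε > 0`. The result follows by
letting `ε → 0⁺`, once both principal values on the right are known to exist (`limUnder` of a
divergent function is a junk value). Existence is obtained by folding the truncated integral
around `x` into `∫_{t > ε} (F(x + t) + F(x - t)) dt` (`integral_fold`): the folded integrands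
`(g(x + t) - g(x - t)) / t` and `(2 g(x) - g(x + t) - g(x - t)) / t²` are bounded by the mean
value inequality, and their two halves are integrable away from `0`, so they are integrable on
`(0, ∞)`.
-/

open MeasureTheory Filter Set Topology

/-- Truncated integral in the principal value defining the Hilbert transform
`Hf(x) = (1/π) p.v. ∫ f(y)/(y-x) dy`. -/
noncomputable def hilbertApprox (f : ℝ → ℝ) (x ε : ℝ) : ℝ :=
  (1 / Real.pi) * ∫ y in {y : ℝ | ε < |y - x|}, f y / (y - x)

/-- The Hilbert transform, defined as the principal value
`Hf(x) = (1/π) lim_{ε→0⁺} ∫_{|y-x|>ε} f(y)/(y-x) dy`. -/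
noncomputable def hilbert (f : ℝ → ℝ) (x : ℝ) : ℝ :=
  limUnder (𝓝[>] (0:ℝ)) (hilbertApprox f x)

/-- Truncated integral in the principal value defining
`Λf(x) = (1/π) p.v. ∫ (f(x)-f(y))/(x-y)² dy`. -/
noncomputable def lamApprox (f : ℝ → ℝ) (x ε : ℝ) : ℝ :=
  (1 / Real.pi) * ∫ y in {y : ℝ | ε < |y - x|}, (f x - f y) / (x - y) ^ 2

/-- The operator `Λ = (-Δ)^{1/2}`, given by the principal value
`Λf(x) = (1/π) lim_{ε→0⁺} ∫_{|y-x|>ε} (f(x)-f(y))/(x-y)² dy`. -/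
noncomputable def lam (f : ℝ → ℝ) (x : ℝ) : ℝ :=
  limUnder (𝓝[>] (0:ℝ)) (lamApprox f x)

lemma truncation_eq (x ε : ℝ) :
    {y : ℝ | ε < |y - x|} = Ioi (x + ε) ∪ Iio (x - ε) := by
  ext y
  simp only [mem_ofPred_eq, mem_union, mem_Ioi, mem_Iio, lt_abs]
  constructor <;> rintro (h | h)
  · left; linarith
  · right; linarith
  · left; linarith
  · right; linarith

lemma measurableSet_truncation (x ε : ℝ) : MeasurableSet {y : ℝ | ε < |y - x|} :=
  measurableSet_lt measurable_const (by fun_prop)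

lemma integral_fold (F : ℝ → ℝ) (x ε : ℝ) (hε : 0 < ε)
    (hF : IntegrableOn F {y : ℝ | ε < |y - x|}) :
    ∫ y in {y : ℝ | ε < |y - x|}, F y = ∫ t in Ioi ε, (F (x + t) + F (x - t)) := by
  rw [truncation_eq x ε] at hF ⊢
  have h1 := hF.left_of_union
  have h2 := hF.right_of_union
  have mp1 : MeasurePreserving (fun t : ℝ => x + t) := measurePreserving_add_left volume x
  have mp2 : MeasurePreserving (fun t : ℝ => x - t) := Measure.measurePreserving_sub_left volume x
  have e1 : MeasurableEmbedding (fun t : ℝ => x + t) := measurableEmbedding_addLeft x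
  have e2 : MeasurableEmbedding (fun t : ℝ => x - t) := measurableEmbedding_subLeft x
  have p1 : (fun t : ℝ => x + t) ⁻¹' Ioi (x + ε) = Ioi ε := by ext t; simp
  have p2 : (fun t : ℝ => x - t) ⁻¹' Iio (x - ε) = Ioi ε := by ext t; simp
  have i1 : IntegrableOn (fun t => F (x + t)) (Ioi ε) := by
    rw [← p1]; exact (mp1.integrableOn_comp_preimage e1).2 h1
  have i2 : IntegrableOn (fun t => F (x - t)) (Ioi ε) := by
    rw [← p2]; exact (mp2.integrableOn_comp_preimage e2).2 h2
  rw [setIntegral_union _ measurableSet_Iio h1 h2, integral_add i1 i2,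
    ← mp1.setIntegral_preimage_emb e1 F, ← mp2.setIntegral_preimage_emb e2 F (Iio (x - ε)), p1, p2]
  rw [Set.disjoint_left]
  intro y hy hy'
  simp only [mem_Ioi, mem_Iio] at hy hy'
  linarith

lemma tendsto_integral_Ioi (φ : ℝ → ℝ) (hφ : IntegrableOn φ (Ioi 0)) :
    Tendsto (fun ε => ∫ t in Ioi ε, φ t) (𝓝[>] (0:ℝ)) (𝓝 (∫ t in Ioi 0, φ t)) := by
  have hc : AECover (volume.restrict (Ioi (0:ℝ))) (𝓝[>] (0:ℝ)) (fun ε => Ioi ε) :=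
    aecover_Ioi_of_Ioi (tendsto_id.mono_left nhdsWithin_le_nhds)
  refine (hc.integral_tendsto_of_countably_generated hφ).congr' ?_
  filter_upwards [self_mem_nhdsWithin] with ε hε
  rw [Measure.restrict_restrict measurableSet_Ioi,
    inter_eq_left.2 (Ioi_subset_Ioi (le_of_lt hε))]

/-- A principal value converges as soon as its folded integrand is integrable on `(0, ∞)`. -/
lemma tendsto_pv (F : ℝ → ℝ) (x : ℝ)
    (hF : ∀ ε > 0, IntegrableOn F {y : ℝ | ε < |y - x|})
    (hφ : IntegrableOn (fun t => F (x + t) + F (x - t)) (Ioi 0)) :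
    ∃ L, Tendsto (fun ε => (1 / Real.pi) * ∫ y in {y : ℝ | ε < |y - x|}, F y)
      (𝓝[>] (0:ℝ)) (𝓝 L) := by
  refine ⟨_, ((tendsto_integral_Ioi _ hφ).congr' ?_).const_mul _⟩
  filter_upwards [self_mem_nhdsWithin] with ε hε
  exact (integral_fold F x ε hε (hF ε hε)).symm

lemma integrableOn_hilbert (g : SchwartzMap ℝ ℝ) (x ε : ℝ) (hε : 0 < ε) :
    IntegrableOn (fun y => g y / (y - x)) {y : ℝ | ε < |y - x|} := by
  have hg : Integrable (fun y => g y) := g.integrable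
  refine Integrable.mono' (g := fun y => |g y| / ε) (hg.abs.div_const ε).integrableOn ?_ ?_
  · exact (g.continuous.measurable.div (by fun_prop)).aestronglyMeasurable
  · filter_upwards [ae_restrict_mem (measurableSet_truncation x ε)] with y hy
    rw [Real.norm_eq_abs, abs_div]
    exact div_le_div_of_nonneg_left (abs_nonneg _) hε (le_of_lt hy)

lemma schwartz_bounded (g : SchwartzMap ℝ ℝ) : ∃ C, 0 < C ∧ ∀ y, |g y| ≤ C := by
  obtain ⟨C, hC, h⟩ := g.decay 0 0
  exact ⟨C, hC, fun y => by simpa using h y⟩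

lemma schwartz_lipschitz (g : SchwartzMap ℝ ℝ) :
    ∃ K, 0 < K ∧ ∀ y z, |g y - g z| ≤ K * |y - z| := by
  obtain ⟨K, hK, h⟩ := schwartz_bounded (SchwartzMap.derivCLM ℝ ℝ g)
  refine ⟨K, hK, fun y z => ?_⟩
  exact convex_univ.norm_image_sub_le_of_norm_deriv_le (fun w _ => g.differentiableAt)
    (fun w _ => h w) (mem_univ z) (mem_univ y)

/-- The second difference of a Schwartz function is `O(t²)`: its derivative in `t` is
`g'(x - t) - g'(x + t)`, which is `O(t)` because `g'` is Lipschitz. -/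
lemma schwartz_second_diff (g : SchwartzMap ℝ ℝ) (x : ℝ) :
    ∃ K, 0 < K ∧ ∀ t, 0 ≤ t → |2 * g x - g (x + t) - g (x - t)| ≤ K * t ^ 2 := by
  obtain ⟨K, hK, h⟩ := schwartz_lipschitz (SchwartzMap.derivCLM ℝ ℝ g)
  refine ⟨2 * K, by positivity, fun t ht => ?_⟩
  have hd : ∀ s ∈ Icc (0:ℝ) t, HasDerivWithinAt (fun s => 2 * g x - g (x + s) - g (x - s))
      (deriv g (x - s) - deriv g (x + s)) (Icc 0 t) s := by
    intro s _
    have h1 : HasDerivAt (fun s => g (x + s)) (deriv g (x + s)) s :=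
      HasDerivAt.comp_const_add x s g.differentiableAt.hasDerivAt
    have h2 : HasDerivAt (fun s => g (x - s)) (-deriv g (x - s)) s :=
      HasDerivAt.comp_const_sub x s g.differentiableAt.hasDerivAt
    exact (((h1.const_sub (2 * g x)).sub h2).congr_deriv (by ring)).hasDerivWithinAt
  have hb : ∀ s ∈ Icc (0:ℝ) t, ‖deriv g (x - s) - deriv g (x + s)‖ ≤ 2 * K * t := by
    intro s hs
    have := h (x - s) (x + s)
    have e : |x - s - (x + s)| = 2 * s := by
      rw [show x - s - (x + s) = -(2 * s) by ring, abs_neg, abs_of_nonneg (by linarith [hs.1])]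
    rw [e] at this
    refine le_trans this ?_
    nlinarith [hs.2]
  have := (convex_Icc 0 t).norm_image_sub_le_of_norm_hasDerivWithin_le hd hb
    (left_mem_Icc.2 ht) (right_mem_Icc.2 ht)
  simp only [Real.norm_eq_abs, sub_zero, add_zero, abs_of_nonneg ht] at this
  convert this using 1
  · congr 1; ring
  · ring

lemma integrableOn_lam (g : SchwartzMap ℝ ℝ) (x ε : ℝ) (hε : 0 < ε) :
    IntegrableOn (fun y => (g x - g y) / (x - y) ^ 2) {y : ℝ | ε < |y - x|} := by
  obtain ⟨C, hC, h⟩ := schwartz_bounded g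
  have hi : Integrable (fun y : ℝ => 2 * C * (1 + 1 / ε ^ 2) * (1 + (y - x) ^ 2)⁻¹) :=
    (integrable_inv_one_add_sq.comp_sub_right x).const_mul _
  refine Integrable.mono' hi.integrableOn ?_ ?_
  · exact ((measurable_const.sub g.continuous.measurable).div
      (by fun_prop)).aestronglyMeasurable
  · filter_upwards [ae_restrict_mem (measurableSet_truncation x ε)] with y hy
    have hy : ε < |y - x| := hy
    have h2 : ε ^ 2 ≤ (y - x) ^ 2 := by
      rw [← sq_abs (y - x)]; gcongr
    have hp : 0 < (y - x) ^ 2 := lt_of_lt_of_le (by positivity) h2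
    have h3 : |g x - g y| ≤ 2 * C := by
      have := abs_sub (g x) (g y); linarith [h x, h y]
    have h4 : 1 ≤ (y - x) ^ 2 / ε ^ 2 := (one_le_div (by positivity)).2 h2
    rw [Real.norm_eq_abs, abs_div, show (x - y) ^ 2 = (y - x) ^ 2 by ring, abs_of_pos hp,
      ← div_eq_mul_inv, div_le_div_iff₀ hp (by positivity)]
    calc |g x - g y| * (1 + (y - x) ^ 2) ≤ 2 * C * (1 + (y - x) ^ 2) := by gcongr
      _ ≤ 2 * C * ((y - x) ^ 2 / ε ^ 2 + (y - x) ^ 2) := by gcongr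
      _ = _ := by ring

/-- The bound `K` on the folded integrand serves on `(0, 1]`; on `(1, ∞)` each of its two halves
is already integrable. -/
lemma integrableOn_fold (F : ℝ → ℝ) (x K : ℝ) (hm : Measurable F)
    (hF : IntegrableOn F {y : ℝ | 1 < |y - x|})
    (hK : ∀ t, 0 < t → |F (x + t) + F (x - t)| ≤ K) :
    IntegrableOn (fun t => F (x + t) + F (x - t)) (Ioi 0) := by
  have hM : Measurable (fun t => F (x + t) + F (x - t)) :=
    (hm.comp (by fun_prop)).add (hm.comp (by fun_prop))
  rw [← Ioc_union_Ioi_eq_Ioi (zero_le_one' ℝ)]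
  refine IntegrableOn.union ?_ ?_
  · refine Measure.integrableOn_of_bounded (M := K) (by simp) hM.aestronglyMeasurable ?_
    filter_upwards [ae_restrict_mem measurableSet_Ioc] with t ht using hK t ht.1
  · rw [truncation_eq x 1] at hF
    have p1 : (fun t : ℝ => x + t) ⁻¹' Ioi (x + 1) = Ioi 1 := by ext t; simp
    have p2 : (fun t : ℝ => x - t) ⁻¹' Iio (x - 1) = Ioi 1 := by ext t; simp
    refine IntegrableOn.add ?_ ?_
    · rw [← p1]
      exact ((measurePreserving_add_left volume x).integrableOn_comp_preimage
        (measurableEmbedding_addLeft x)).2 hF.left_of_union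
    · rw [← p2]
      exact ((Measure.measurePreserving_sub_left volume x).integrableOn_comp_preimage
        (measurableEmbedding_subLeft x)).2 hF.right_of_union

lemma exists_hilbert (g : SchwartzMap ℝ ℝ) (x : ℝ) :
    ∃ L, Tendsto (hilbertApprox g x) (𝓝[>] (0:ℝ)) (𝓝 L) := by
  obtain ⟨K, hK, h⟩ := schwartz_lipschitz g
  refine tendsto_pv (fun y => g y / (y - x)) x (integrableOn_hilbert g x)
    (integrableOn_fold _ x (2 * K) (g.continuous.measurable.div (by fun_prop))
      (integrableOn_hilbert g x 1 one_pos) fun t ht => ?_)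
  have e : g (x + t) / (x + t - x) + g (x - t) / (x - t - x) = (g (x + t) - g (x - t)) / t := by
    rw [show x + t - x = t by ring, show x - t - x = -t by ring]
    field_simp
    ring
  have := h (x + t) (x - t)
  rw [show x + t - (x - t) = 2 * t by ring, abs_of_pos (by linarith : 0 < 2 * t)] at this
  change |g (x + t) / (x + t - x) + g (x - t) / (x - t - x)| ≤ 2 * K
  rw [e, abs_div, abs_of_pos ht, div_le_iff₀ ht]
  linarith

lemma exists_lam (g : SchwartzMap ℝ ℝ) (x : ℝ) :
    ∃ L, Tendsto (lamApprox g x) (𝓝[>] (0:ℝ)) (𝓝 L) := by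
  obtain ⟨K, hK, h⟩ := schwartz_second_diff g x
  refine tendsto_pv (fun y => (g x - g y) / (x - y) ^ 2) x (integrableOn_lam g x)
    (integrableOn_fold _ x K
      ((measurable_const.sub g.continuous.measurable).div (by fun_prop))
      (integrableOn_lam g x 1 one_pos) fun t ht => ?_)
  have e : (g x - g (x + t)) / (x - (x + t)) ^ 2 + (g x - g (x - t)) / (x - (x - t)) ^ 2
      = (2 * g x - g (x + t) - g (x - t)) / t ^ 2 := by
    rw [show x - (x + t) = -t by ring, show x - (x - t) = t by ring, neg_sq]
    ring
  change |(g x - g (x + t)) / (x - (x + t)) ^ 2 + (g x - g (x - t)) / (x - (x - t)) ^ 2| ≤ K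
  rw [e, abs_div, abs_of_pos (by positivity : 0 < t ^ 2), div_le_iff₀ (by positivity)]
  exact h t ht.le

lemma lamApprox_mul_id (g : SchwartzMap ℝ ℝ) (x ε : ℝ) (hε : 0 < ε) :
    lamApprox (fun y => y * g y) x ε = -hilbertApprox g x ε + x * lamApprox g x ε := by
  have key : ∫ y in {y : ℝ | ε < |y - x|}, (x * g x - y * g y) / (x - y) ^ 2
      = ∫ y in {y : ℝ | ε < |y - x|},
        (x * ((g x - g y) / (x - y) ^ 2) - g y / (y - x)) := by
    refine setIntegral_congr_fun (measurableSet_truncation x ε) fun y hy => ?_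
    have hy : ε < |y - x| := hy
    have h1 : y - x ≠ 0 := abs_pos.1 (hε.trans hy)
    have h2 : (x - y) ^ 2 = (y - x) ^ 2 := by ring
    simp only [h2]
    field_simp
    ring
  simp only [lamApprox, hilbertApprox]
  rw [key, integral_sub ((integrableOn_lam g x ε hε).const_mul x)
    (integrableOn_hilbert g x ε hε), integral_const_mul]
  ring

/-- Theorem: for a Schwartz function `g` and every `x ∈ ℝ`,
`Λ[y ↦ y·g(y)](x) = -Hg(x) + x·Λg(x)`. -/
theorem stmt_10 (g : SchwartzMap ℝ ℝ) (x : ℝ) :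
    lam (fun y => y * g y) x = -hilbert (⇑g) x + x * lam (⇑g) x := by
  obtain ⟨A, hA⟩ := exists_hilbert g x
  obtain ⟨B, hB⟩ := exists_lam g x
  have hl : Tendsto (lamApprox (fun y => y * g y) x) (𝓝[>] (0:ℝ)) (𝓝 (-A + x * B)) := by
    refine (hA.neg.add (hB.const_mul x)).congr' ?_
    filter_upwards [self_mem_nhdsWithin] with ε hε
    exact (lamApprox_mul_id g x ε hε).symm
  rw [lam, lam, hilbert, hl.limUnder_eq, hA.limUnder_eq, hB.limUnder_eq]
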